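/- arXiv:2310.20449 — 2 statements merged into one kernel-verified Lean document; each statement's English description precedes it below -/
import Mathlib

section
/- Let (I_p) be a sieving system satisfying hypotheses (b), (c) and (e). Then ∑_{ν=1}^{B} ν·ρ_ν = 1. -/
open scoped BigOperators Classical

noncomputable section

/-- The set of primes `p ≤ t`. -/
def primesLe (t : ℝ) : Finset ℕ :=
  ((Finset.range (⌊t⌋₊ + 1)).filter Nat.Prime).filter (fun p => (p : ℝ) ≤ t)

/-- `σ(t) = ∏_{p ≤ t} (1 - |I_p|/p)`. -/
def sigmaLe (I : ∀ p : ℕ, Finset (ZMod p)) (t : ℝ) : ℝ :=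
  ∏ p ∈ primesLe t, (1 - ((I p).card : ℝ) / (p : ℝ))

/-!
Let `a p = |I_p|` at primes and `a n = 0` elsewhere. Hypothesis (e) says
`∑_{k ≤ n} a k ~ s n / log n` with `s = ∑ ν ρ_ν`, so partial summation gives
`∑_{k ≤ n} a k / k ~ s log log n`. Taking logarithms in (c), where
`log (1 - a k / k) = -a k / k + O(1 / k ^ 2)` by (b), gives `∑_{k ≤ n} a k / k = log log n + O(1)`.
Comparing the two forces `s = 1`.
-/

section Analysis

open Filter Topology Asymptotics Finset Real

section StolzCesaro

variable {b : ℕ → ℝ}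

lemma isLittleO_of_succ_sub_isLittleO {E : Type*} [NormedAddCommGroup E] {x : ℕ → E}
    (hb : ∀ᶠ n in atTop, b n ≤ b (n + 1)) (hb_top : Tendsto b atTop atTop)
    (h : (fun n => x (n + 1) - x n) =o[atTop] fun n => b (n + 1) - b n) : x =o[atTop] b := by
  obtain ⟨N, hN⟩ := eventually_atTop.1 hb
  have hb_shift : Tendsto (fun n => b (n + N)) atTop atTop :=
    hb_top.comp (tendsto_add_atTop_nat N)
  have hnorm_top := tendsto_norm_atTop_atTop.comp hb_shift
  have hgap_nonneg : 0 ≤ fun n => b (n + 1 + N) - b (n + N) := fun n => by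
    simpa only [Pi.zero_apply, sub_nonneg, add_right_comm n 1 N] using hN (n + N) (N.le_add_left n)
  have hgap_sum : Tendsto (fun n => ∑ i ∈ range n, (b (i + 1 + N) - b (i + N))) atTop atTop :=
    (tendsto_atTop_add_const_right atTop (-b (0 + N)) hb_shift).congr fun n => by
      rw [sum_range_sub fun i => b (i + N), sub_eq_add_neg]
  have hgap : (fun n => x (n + 1 + N) - x (n + N)) =o[atTop]
      fun n => b (n + 1 + N) - b (n + N) := by
    simpa only [Function.comp_def, add_right_comm _ 1 N] using
      h.comp_tendsto (tendsto_add_atTop_nat N)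
  have hsum := hgap.sum_range hgap_nonneg hgap_sum
  simp only [sum_range_sub fun i => x (i + N), sum_range_sub fun i => b (i + N)] at hsum
  rw [← map_add_atTop_eq_nat N, isLittleO_map]
  have hb_init : (fun _ => b (0 + N)) =o[atTop] fun n => b (n + N) :=
    isLittleO_const_left.2 (Or.inr hnorm_top)
  have hx_init : (fun _ => x (0 + N)) =o[atTop] fun n => b (n + N) :=
    isLittleO_const_left.2 (Or.inr hnorm_top)
  simpa only [Function.comp_def, sub_add_cancel] using
    (hsum.trans_isBigO ((isBigO_refl _ atTop).sub hb_init.isBigO)).add hx_init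

lemma tendsto_div_of_tendsto_succ_sub_div_succ_sub {x : ℕ → ℝ} {s : ℝ}
    (hb : ∀ᶠ n in atTop, b n < b (n + 1)) (hb_top : Tendsto b atTop atTop)
    (h : Tendsto (fun n => (x (n + 1) - x n) / (b (n + 1) - b n)) atTop (𝓝 s)) :
    Tendsto (fun n => x n / b n) atTop (𝓝 s) := by
  have hdiff : (fun n => (x (n + 1) - s * b (n + 1)) - (x n - s * b n)) =o[atTop]
      fun n => b (n + 1) - b n := by
    refine (isLittleO_iff_tendsto' (hb.mono fun n hn h0 => absurd h0 (sub_pos.2 hn).ne')).2 ?_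
    refine (sub_self s ▸ h.sub_const s).congr' ?_
    filter_upwards [hb] with n hn
    have hgap := (sub_pos.2 hn).ne'
    field_simp
    ring
  have hlittle : (fun n => x n - s * b n) =o[atTop] b :=
    isLittleO_of_succ_sub_isLittleO (hb.mono fun _ hn => hn.le) hb_top hdiff
  refine (zero_add s ▸ hlittle.tendsto_div_nhds_zero.add_const s).congr' ?_
  filter_upwards [hb_top.eventually_ne_atTop 0] with n hn
  rw [sub_div, mul_div_cancel_right₀ s hn, sub_add_cancel]

end StolzCesaro

lemma log_one_add_isEquivalent : (fun t : ℝ => log (1 + t)) ~[𝓝 0] fun t => t := by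
  simpa [IsEquivalent, Pi.sub_def] using
    hasDerivAt_iff_isLittleO_nhds_zero.1 (hasDerivAt_log one_ne_zero)

lemma add_log_one_sub_isBigO : (fun t : ℝ => t + log (1 - t)) =O[𝓝 0] fun t => t ^ 2 := by
  refine IsBigO.of_bound 2 ?_
  filter_upwards [Metric.ball_mem_nhds (0 : ℝ) one_half_pos] with t ht
  rw [mem_ball_zero_iff, norm_eq_abs] at ht
  have htaylor : |t + log (1 - t)| ≤ |t| ^ 2 / (1 - |t|) := by
    simpa using abs_log_sub_add_sum_range_le (x := t) (by linarith) 1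
  calc |t + log (1 - t)| ≤ |t| ^ 2 / (1 - |t|) := htaylor
    _ ≤ |t| ^ 2 / (1 / 2) := by gcongr; linarith
    _ = 2 * ‖t ^ 2‖ := by rw [norm_pow, norm_eq_abs]; ring

lemma tendsto_log_natCast : Tendsto (fun n : ℕ => log n) atTop atTop :=
  tendsto_log_atTop.comp tendsto_natCast_atTop_atTop

lemma tendsto_log_log_natCast : Tendsto (fun n : ℕ => log (log n)) atTop atTop :=
  tendsto_log_atTop.comp tendsto_log_natCast

lemma tendsto_log_log_succ_sub_mul :
    Tendsto (fun n : ℕ => (log (log (n + 1)) - log (log n)) * (n * log n)) atTop (𝓝 1) := by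
  -- With `u n = (log (n + 1) - log n) / log n → 0`, the difference is `log (1 + u n) ~ u n`.
  have hu : Tendsto (fun n : ℕ => (log (n + 1) - log n) / log n) atTop (𝓝 0) :=
    tendsto_log_nat_add_one_sub_log.div_atTop tendsto_log_natCast
  have hequiv := (log_one_add_isEquivalent.comp_tendsto hu).mul
    (IsEquivalent.refl (u := fun n : ℕ => (n : ℝ) * log n))
  have hlim : Tendsto (fun n : ℕ => n * log (1 + 1 / (n : ℝ))) atTop (𝓝 1) :=
    (tendsto_mul_log_one_add_div_atTop 1).comp tendsto_natCast_atTop_atTop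
  refine (hequiv.symm.tendsto_nhds (hlim.congr' ?_)).congr' ?_
  all_goals
    filter_upwards [eventually_gt_atTop 1] with n hn
    have hn₀ : (n : ℝ) ≠ 0 := by positivity
    have hn₁ : 0 < log n := log_pos (by exact_mod_cast hn)
    have hn₂ : 0 < log (n + 1) := log_pos (by norm_cast; lia)
  · have hsucc : 1 + 1 / (n : ℝ) = (n + 1) / n := by field_simp
    rw [hsucc, log_div (by positivity) hn₀]
    simp only [Pi.mul_apply, Function.comp_apply]
    field_simp
  · have hratio : 1 + (log (n + 1) - log n) / log n = log (n + 1) / log n := by field_simp; ring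
    simp only [Pi.mul_apply, Function.comp_apply, hratio]
    rw [log_div hn₂.ne' hn₁.ne']

lemma log_log_lt_log_log {x y : ℝ} (hx : 1 < x) (hxy : x < y) : log (log x) < log (log y) :=
  log_lt_log (log_pos hx) (log_lt_log (by linarith) hxy)

-- The terms with index `0` involve `1 / 0 = 0`, under which the identity still holds.
lemma sum_div_eq_add_sum_mul (a : ℕ → ℝ) (n : ℕ) :
    ∑ k ∈ range (n + 1), a k / k = (∑ k ∈ range (n + 1), a k) / n +
      ∑ i ∈ range n, (∑ k ∈ range (i + 1), a k) * (1 / i - 1 / (i + 1)) := by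
  have h := sum_range_by_parts (fun i : ℕ => (1 : ℝ) / i) a (n + 1)
  simp only [smul_eq_mul, add_tsub_cancel_right, Nat.cast_succ] at h
  calc ∑ k ∈ range (n + 1), a k / k = ∑ k ∈ range (n + 1), 1 / (k : ℝ) * a k :=
        sum_congr rfl fun k _ => by ring
    _ = _ := by
      rw [h, sub_eq_add_neg, ← sum_neg_distrib]
      congr 1
      · ring
      · exact sum_congr rfl fun i _ => by ring

lemma tendsto_sum_div_div_log_log {a : ℕ → ℝ} {s : ℝ}
    (ha : Tendsto (fun n : ℕ => (∑ k ∈ range (n + 1), a k) / (n / log n)) atTop (𝓝 s)) :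
    Tendsto (fun n : ℕ => (∑ k ∈ range (n + 1), a k / k) / log (log n)) atTop (𝓝 s) := by
  have hboundary : Tendsto (fun n : ℕ => (∑ k ∈ range (n + 1), a k) / n / log (log n))
      atTop (𝓝 0) := by
    refine Tendsto.div_atTop ((ha.div_atTop tendsto_log_natCast).congr' ?_) tendsto_log_log_natCast
    filter_upwards [eventually_gt_atTop 1] with n hn
    have hlog_pos : 0 < log n := log_pos (by exact_mod_cast hn)
    field_simp
  have hmain : Tendsto (fun n : ℕ => (∑ i ∈ range n, (∑ k ∈ range (i + 1), a k) *
      (1 / (i : ℝ) - 1 / (i + 1))) / log (log n)) atTop (𝓝 s) := by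
    have hmono : ∀ᶠ n : ℕ in atTop, log (log n) < log (log (n + 1 : ℕ)) := by
      filter_upwards [eventually_gt_atTop 1] with n hn
      exact log_log_lt_log_log (by exact_mod_cast hn) (by exact_mod_cast n.lt_succ_self)
    refine tendsto_div_of_tendsto_succ_sub_div_succ_sub hmono tendsto_log_log_natCast ?_
    have hfactors := (ha.mul (tendsto_natCast_div_add_atTop (1 : ℝ))).div
      tendsto_log_log_succ_sub_mul one_ne_zero
    rw [mul_one, div_one] at hfactors
    refine hfactors.congr' ?_
    filter_upwards [eventually_gt_atTop 1] with n hn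
    have hlog_pos : 0 < log n := log_pos (by exact_mod_cast hn)
    simp only [sum_range_succ_sub_sum, Nat.cast_succ, Pi.div_apply]
    field_simp
    ring
  refine (zero_add s ▸ hboundary.add hmain).congr fun n => ?_
  rw [sum_div_eq_add_sum_mul, add_div]

lemma summable_add_log_one_sub {ι : Type*} {x : ι → ℝ} (hx : Summable fun i => x i ^ 2) :
    Summable fun i => x i + log (1 - x i) := by
  have hx₀ : Tendsto x cofinite (𝓝 0) := by
    simpa only [tendsto_zero_iff_abs_tendsto_zero x, Function.comp_def, sqrt_zero,
      sqrt_sq_eq_abs] using hx.tendsto_cofinite_zero.sqrt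
  exact summable_of_isBigO hx (add_log_one_sub_isBigO.comp_tendsto hx₀)

lemma exists_tendsto_sum_sub_log_log {x : ℕ → ℝ} {C : ℝ} (hC : C ≠ 0)
    (hx : Summable fun n => x n ^ 2)
    (hprod : Tendsto (fun n : ℕ => (∏ k ∈ range (n + 1), (1 - x k)) * log n) atTop (𝓝 C)) :
    ∃ c, Tendsto (fun n : ℕ => ∑ k ∈ range (n + 1), x k - log (log n)) atTop (𝓝 c) := by
  have hcorr := (summable_add_log_one_sub hx).hasSum.tendsto_sum_nat.comp
    (tendsto_add_atTop_nat 1)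
  refine ⟨_, (hcorr.sub (hprod.log hC)).congr' ?_⟩
  filter_upwards [hprod.eventually_ne hC] with n hn
  obtain ⟨hfactors, hlog⟩ := mul_ne_zero_iff.1 hn
  rw [log_mul hfactors hlog, log_prod (prod_ne_zero_iff.1 hfactors), Function.comp_apply,
    sum_add_distrib]
  ring

lemma tendsto_div_one_of_tendsto_sub {α : Type*} {l : Filter α} {f g : α → ℝ} {c : ℝ}
    (hg : Tendsto g l atTop) (hfg : Tendsto (fun t => f t - g t) l (𝓝 c)) :
    Tendsto (fun t => f t / g t) l (𝓝 1) := by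
  refine (zero_add (1 : ℝ) ▸ (hfg.div_atTop hg).add_const 1).congr' ?_
  filter_upwards [hg.eventually_ne_atTop 0] with t ht
  rw [sub_div, div_self ht, sub_add_cancel]

lemma eq_one_of_tendsto_sum_of_tendsto_prod {a : ℕ → ℝ} {s C : ℝ} (hC : C ≠ 0)
    (hsq : Summable fun n : ℕ => (a n / n) ^ 2)
    (hsum : Tendsto (fun n : ℕ => (∑ k ∈ range (n + 1), a k) / (n / log n)) atTop (𝓝 s))
    (hprod : Tendsto (fun n : ℕ => (∏ k ∈ range (n + 1), (1 - a k / k)) * log n) atTop (𝓝 C)) :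
    s = 1 := by
  obtain ⟨c, hc⟩ := exists_tendsto_sum_sub_log_log hC hsq hprod
  exact tendsto_nhds_unique (tendsto_sum_div_div_log_log hsum)
    (tendsto_div_one_of_tendsto_sub tendsto_log_log_natCast hc)

lemma summable_div_sq_of_abs_le {a : ℕ → ℝ} {B : ℝ} (ha : ∀ n, |a n| ≤ B) :
    Summable fun n : ℕ => (a n / n) ^ 2 := by
  refine .of_nonneg_of_le (fun n => sq_nonneg _) (fun n => ?_)
    ((summable_one_div_nat_pow.2 one_lt_two).mul_left (B ^ 2))
  rw [div_pow, ← sq_abs, mul_one_div]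
  gcongr
  exact ha n

end Analysis

section Sieve

open Filter Topology Finset Real

lemma sum_eq_sum_Icc_mul_card_filter {ι : Type*} {s : Finset ι} {f : ι → ℕ} {B : ℕ}
    (hf : ∀ i ∈ s, f i ≤ B) :
    ∑ i ∈ s, f i = ∑ ν ∈ Icc 1 B, ν * #{i ∈ s | f i = ν} := by
  have hlevel : ∀ i ∈ s, f i = ∑ ν ∈ Icc 1 B, if f i = ν then ν else 0 := by
    intro i hi
    have hle := hf i hi
    rw [sum_ite_eq]
    grind
  rw [sum_congr rfl hlevel, sum_comm]
  simp [← sum_filter, mul_comm]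

variable {I : ∀ p : ℕ, Finset (ZMod p)} {B : ℕ}

/-- The sequence `n ↦ |I_n|` supported on the primes, which turns sums and products over primes
into ones over initial segments of `ℕ`. -/
def sieveWeight (I : ∀ p : ℕ, Finset (ZMod p)) (n : ℕ) : ℝ :=
  if n.Prime then #(I n) else 0

lemma abs_sieveWeight_le (hI : ∀ p : ℕ, p.Prime → #(I p) ≤ B) (n : ℕ) :
    |sieveWeight I n| ≤ B := by
  unfold sieveWeight
  split_ifs with hn
  · simpa only [Nat.abs_cast, Nat.cast_le] using hI n hn
  · simp

lemma primesLe_natCast (n : ℕ) : primesLe n = {p ∈ range (n + 1) | p.Prime} := by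
  ext p
  simp only [primesLe, Nat.floor_natCast, mem_filter, mem_range, Nat.cast_le]
  lia

lemma sigmaLe_natCast (n : ℕ) :
    sigmaLe I n = ∏ k ∈ range (n + 1), (1 - sieveWeight I k / k) := by
  rw [sigmaLe, primesLe_natCast, prod_filter]
  refine prod_congr rfl fun k _ => ?_
  unfold sieveWeight
  split_ifs <;> simp

lemma sum_sieveWeight (hI : ∀ p : ℕ, p.Prime → #(I p) ≤ B) (n : ℕ) :
    ∑ k ∈ range (n + 1), sieveWeight I k =
      ∑ ν ∈ Icc 1 B, (ν : ℝ) * #{p ∈ primesLe n | #(I p) = ν} := by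
  have hcard : ∀ p ∈ primesLe n, #(I p) ≤ B := fun p hp =>
    hI p (mem_filter.1 (primesLe_natCast n ▸ hp)).2
  simp only [sieveWeight]
  rw [← sum_filter, ← primesLe_natCast]
  exact_mod_cast sum_eq_sum_Icc_mul_card_filter hcard

lemma tendsto_sum_sieveWeight {ρ : ℕ → ℝ} (hI : ∀ p : ℕ, p.Prime → #(I p) ≤ B)
    (hρ : ∀ ν ∈ Icc 1 B, Tendsto
      (fun n : ℕ => (#{p ∈ primesLe n | #(I p) = ν} : ℝ) / (n / log n)) atTop (𝓝 (ρ ν))) :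
    Tendsto (fun n : ℕ => (∑ k ∈ range (n + 1), sieveWeight I k) / (n / log n)) atTop
      (𝓝 (∑ ν ∈ Icc 1 B, ν * ρ ν)) := by
  simp only [sum_sieveWeight hI, sum_div, mul_div_assoc]
  exact tendsto_finsetSum _ fun ν hν => (hρ ν hν).const_mul _

end Sieve

/-- If the sieving system `(I_p)` satisfies hypotheses (b), (c) and (e), then
`∑_{ν=1}^B ν ρ_ν = 1`. -/
theorem stmt17 (I : ∀ p : ℕ, Finset (ZMod p)) (B : ℕ) (ρ : ℕ → ℝ)
    -- (b)
    (hypb : ∀ p : ℕ, p.Prime → (I p).card ≤ B)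
    -- (c)
    (hypc : ∃ C₁ : ℝ, 0 < C₁ ∧
      Filter.Tendsto (fun x : ℝ => sigmaLe I x * Real.log x) Filter.atTop (nhds C₁))
    -- (e)
    (hype : ∀ ν : ℕ, 1 ≤ ν → ν ≤ B →
      Filter.Tendsto (fun x : ℝ =>
          (((primesLe x).filter (fun p => (I p).card = ν)).card : ℝ) / (x / Real.log x))
        Filter.atTop (nhds (ρ ν))) :
    ∑ ν ∈ Finset.Icc 1 B, (ν : ℝ) * ρ ν = 1 := by
  obtain ⟨C₁, hC₁, hprod⟩ := hypc
  refine eq_one_of_tendsto_sum_of_tendsto_prod hC₁.ne'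
    (summable_div_sq_of_abs_le (abs_sieveWeight_le hypb))
    (tendsto_sum_sieveWeight hypb fun ν hν => ?_) ?_
  · obtain ⟨hν₁, hνB⟩ := Finset.mem_Icc.1 hν
    exact (hype ν hν₁ hνB).comp tendsto_natCast_atTop_atTop
  · simpa only [Function.comp_def, sigmaLe_natCast] using
      hprod.comp tendsto_natCast_atTop_atTop

end
end

section
/- Let f̃ ∈ ℤ[x] be a polynomial of degree d ≥ 1 with leading coefficient c, and write f̃ = c·∏_{i=1}^d (x − r_i) with complex roots r_1, …, r_d. Then for any polynomial g ∈ ℤ[x] with deg g ≤ d − 1, the polynomial c^{d(d−1)} · ∏_{i=1}^d g(x + r_i) has integer coefficients. -/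
open scoped BigOperators Classical

noncomputable section

/-!
Let `f = c ∏ (y - rᵢ)`. Then `c ^ n ∏ g(x + rᵢ)` is the resultant with respect to `y` of `f(y)` and
`g(y + x)` (taken in formal degree `n` in the second argument), for any `n ≥ deg g`, in particular
for `n = d(d - 1)`. The resultant is a determinant in the coefficients, which are integer
polynomials in `x`, so it is itself an integer polynomial in `x`.
-/

section

open Polynomial

variable {R S ι : Type*} [CommRing R] [CommRing S] [Fintype ι]

theorem resultant_prod_X_sub_C_left (r : ι → R) {g : R[X]} {n : ℕ} (hg : g.natDegree ≤ n) :
    resultant (∏ i, (X - C (r i))) g (Fintype.card ι) n = ∏ i, g.eval (r i) := by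
  nontriviality R
  have h := resultant_prod_left Finset.univ (fun i ↦ X - C (r i)) g n (by simp) hg
  simpa only [natDegree_finsetProd_X_sub_C_eq_card, Finset.card_univ, natDegree_X_sub_C,
    resultant_X_sub_C_left _ _ _ hg] using h

theorem eval_C_taylor_X_map_C (g : R[X]) (a : R) :
    (taylor X (g.map C)).eval (C a) = g.comp (X + C a) := by
  rw [taylor_eval, eval_map, comp, add_comm]

theorem resultant_C_mul_prod_X_sub_C_taylor_X (c : R) (r : ι → R) {g : R[X]} {n : ℕ}
    (hg : g.natDegree ≤ n) :
    resultant ((C c * ∏ i, (X - C (r i))).map C) (taylor X (g.map C)) (Fintype.card ι) n =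
      C (c ^ n) * ∏ i, g.comp (X + C (r i)) := by
  have hmap : (C c * ∏ i, (X - C (r i))).map C = C (C c) * ∏ i, (X - C (C (r i))) := by
    simp [Polynomial.map_prod]
  have hdeg : (taylor X (g.map C)).natDegree ≤ n := by
    rw [natDegree_taylor]
    exact natDegree_map_le.trans hg
  rw [hmap, resultant_C_mul_left, resultant_prod_X_sub_C_left _ hdeg, C_pow]
  simp only [eval_C_taylor_X_map_C]

theorem map_resultant_map_C_taylor_X (φ : R →+* S) (f g : R[X]) (m n : ℕ) :
    (resultant (f.map C) (taylor X (g.map C)) m n).map φ =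
      resultant ((f.map φ).map C) (taylor X ((g.map φ).map C)) m n := by
  have map_map_C (p : R[X]) : (p.map C).map (mapRingHom φ) = (p.map φ).map C := by
    simp only [Polynomial.map_map, mapRingHom_comp_C]
  rw [← coe_mapRingHom, ← resultant_map_map, map_taylor, map_map_C, map_map_C, coe_mapRingHom,
    map_X]

theorem stmt18_general (φ : R →+* S) {f : R[X]} {c : R} {r : ι → S}
    (hroots : f.map φ = C (φ c) * ∏ i, (X - C (r i))) {g : R[X]} {n : ℕ} (hg : g.natDegree ≤ n) :
    ∃ h : R[X], h.map φ = C (φ c ^ n) * ∏ i, (g.map φ).comp (X + C (r i)) :=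
  ⟨resultant (f.map C) (taylor X (g.map C)) (Fintype.card ι) n, by
    rw [map_resultant_map_C_taylor_X, hroots,
      resultant_C_mul_prod_X_sub_C_taylor_X _ _ (natDegree_map_le.trans hg)]⟩

end

/-- If `f̃ ∈ ℤ[x]` has degree `d ≥ 1`, leading coefficient `c` and complex roots
`r_1, …, r_d` (with multiplicity), then for any `g ∈ ℤ[x]` with `deg g ≤ d-1` the
polynomial `c^{d(d-1)} ∏_{i=1}^d g(x + r_i)` has integer coefficients. -/
theorem stmt18 (ft : Polynomial ℤ) (d : ℕ) (hdeg : ft.natDegree = d) (hd1 : 1 ≤ d)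
    (c : ℤ) (hc : c = ft.leadingCoeff)
    (r : Fin d → ℂ)
    (hroots : ft.map (Int.castRingHom ℂ)
      = Polynomial.C (c : ℂ) * ∏ i : Fin d, (Polynomial.X - Polynomial.C (r i)))
    (g : Polynomial ℤ) (hg : g.natDegree ≤ d - 1) :
    ∃ h : Polynomial ℤ, h.map (Int.castRingHom ℂ)
      = Polynomial.C ((c : ℂ) ^ (d * (d - 1))) *
          ∏ i : Fin d, (g.map (Int.castRingHom ℂ)).comp (Polynomial.X + Polynomial.C (r i)) :=
  stmt18_general (Int.castRingHom ℂ) hroots (hg.trans (Nat.le_mul_of_pos_left _ hd1))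

end
end
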